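/- Let μ₁, μ₂ be probability measures on ℝ with continuous, everywhere positive densities f_{μ₁}, f_{μ₂} with respect to Lebesgue measure, and let L > 0. If 𝓘♭_{μ₂}(v) ≥ (1/L)·𝓘♭_{μ₁}(v) for all v ∈ (0,1), then for every k ≥ 1, λ_k^Lip(ℝ,|·|,μ₂) ≥ (1/L²)·λ_k^Lip(ℝ,|·|,μ₁). -/

import Mathlib

open MeasureTheory Filter Topology ENNReal

/-- The local Lipschitz constant `|∇f|(x) = limsup_{y→x} |f(y)-f(x)|/d(y,x)`
(equal to `0` at isolated points, by the convention `Real.sInf ∅ = 0`). -/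
noncomputable def localLip {Ω : Type*} [PseudoMetricSpace Ω] (f : Ω → ℝ) (x : Ω) : ℝ :=
  Filter.limsup (fun y => |f y - f x| / dist y x) (nhdsWithin x {x}ᶜ)

/-- Membership in the metric Sobolev space `W^{1,2}_Lip(Ω,d,μ)`. -/
def memW12Lip {Ω : Type*} [PseudoMetricSpace Ω] [MeasurableSpace Ω]
    (μ : Measure Ω) (f : Ω → ℝ) : Prop :=
  LocallyLipschitz f ∧
    (∫⁻ x, ENNReal.ofReal ((f x) ^ 2) ∂μ) + (∫⁻ x, ENNReal.ofReal ((localLip f x) ^ 2) ∂μ) < ⊤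

/-- The `k`-th metric eigenvalue `λ_k^Lip(Ω,d,μ)`: the infimum over `k`-dimensional
linear subspaces `F ⊆ W^{1,2}_Lip` of the supremum of the Rayleigh quotient over `F`. -/
noncomputable def lambdaLip {Ω : Type*} [PseudoMetricSpace Ω] [MeasurableSpace Ω]
    (μ : Measure Ω) (k : ℕ) : ℝ :=
  sInf { a : ℝ | ∃ F : Submodule ℝ (Ω → ℝ), Module.finrank ℝ F = k ∧
    (∀ f ∈ F, memW12Lip μ f) ∧
    a = sSup { r : ℝ | ∃ f ∈ F, (∫ x, (f x) ^ 2 ∂μ) ≠ 0 ∧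
      r = (∫ x, (localLip f x) ^ 2 ∂μ) / (∫ x, (f x) ^ 2 ∂μ) } }

/-- The cumulative distribution function `F_μ(x) = μ((-∞,x])` of a measure on `ℝ`. -/
noncomputable def cdf (μ : Measure ℝ) : ℝ → ℝ := fun x => (μ (Set.Iic x)).toReal

/-- The one-sided flat isoperimetric profile `𝓘♭_μ = f_μ ∘ F_μ⁻¹` of a measure on `ℝ`
with density `f` (here `F_μ⁻¹` is interpreted via `Function.invFun`). -/
noncomputable def flatIsopProfile (μ : Measure ℝ) (f : ℝ → ℝ) : ℝ → ℝ :=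
  fun v => f (Function.invFun (cdf μ) v)

/-!
The monotone map `T = F_{μ₂}⁻¹ ∘ F_{μ₁}` pushes `μ₁` forward to `μ₂`, and its derivative at `x` is
`(𝓘♭_{μ₁} / 𝓘♭_{μ₂})(F_{μ₁} x) ≤ L`, so `T` is `L`-Lipschitz. Pulling back by an `L`-Lipschitz
measure-preserving map keeps `L²` norms and multiplies the energy by at most `L²`, because
`|∇(f ∘ T)| ≤ L · |∇f| ∘ T` pointwise. The range of `T` is dense, so the pull-back is injective on
continuous functions: it turns a `k`-dimensional trial space for `μ₂` into one for `μ₁`.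

Since `sSup` of an unbounded set and `sInf ∅` are `0` in `ℝ`, two more facts are needed: Rayleigh
quotients are bounded on a finite-dimensional space, where the energy seminorm is dominated by the
`L²` norm, and trial spaces of every dimension exist, spanned by bumps at finitely many points.
-/

section LocalLip

variable {Ω Ω' : Type*} [PseudoMetricSpace Ω] [PseudoMetricSpace Ω'] {f g : Ω → ℝ} {x : Ω} {a : ℝ}

lemma localLip_eq_zero_of_nhdsNE_eq_bot (f : Ω → ℝ) (hx : 𝓝[≠] x = ⊥) : localLip f x = 0 := by
  simp [localLip, hx, limsup_eq]

lemma localLip_nonneg (f : Ω → ℝ) (x : Ω) : 0 ≤ localLip f x := by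
  rcases (𝓝[≠] x).eq_or_neBot with hx | hx
  · exact (localLip_eq_zero_of_nhdsNE_eq_bot f hx).ge
  · rw [localLip, limsup_eq]
    refine Real.sInf_nonneg fun b hb => ?_
    obtain ⟨y, hy⟩ := (Set.mem_ofPred_eq.mp hb).exists
    exact (div_nonneg (abs_nonneg _) dist_nonneg).trans hy

lemma localLip_le_of_eventually (ha : 0 ≤ a)
    (h : ∀ᶠ y in 𝓝 x, |f y - f x| ≤ a * dist y x) : localLip f x ≤ a := by
  rcases (𝓝[≠] x).eq_or_neBot with hx | hx
  · exact (localLip_eq_zero_of_nhdsNE_eq_bot f hx).trans_le ha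
  · refine limsup_le_of_le (isCoboundedUnder_le_of_le _ (x := 0) fun y => by positivity) ?_
    filter_upwards [h.filter_mono nhdsWithin_le_nhds] with y hy
    exact div_le_of_le_mul₀ dist_nonneg ha hy

lemma exists_eventually_abs_sub_le_mul_dist (hf : LocallyLipschitz f) (x : Ω) :
    ∃ K : ℝ, 0 ≤ K ∧ ∀ᶠ y in 𝓝 x, |f y - f x| ≤ K * dist y x := by
  obtain ⟨K, t, ht, hK⟩ := hf x
  exact ⟨K, K.2, eventually_of_mem ht fun y hy => hK.dist_le_mul y hy x (mem_of_mem_nhds ht)⟩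

lemma eventually_abs_sub_le_of_localLip_lt (hf : LocallyLipschitz f) (ha : localLip f x < a) :
    ∀ᶠ y in 𝓝 x, |f y - f x| ≤ a * dist y x := by
  obtain ⟨K, hK, hKx⟩ := exists_eventually_abs_sub_le_mul_dist hf x
  have hbdd : IsBoundedUnder (· ≤ ·) (𝓝[≠] x) fun y => |f y - f x| / dist y x := by
    refine isBoundedUnder_of_eventually_le (a := K) ?_
    filter_upwards [hKx.filter_mono nhdsWithin_le_nhds] with y hy
    exact div_le_of_le_mul₀ dist_nonneg hK hy
  have hquot := eventually_nhdsWithin_iff.1 (eventually_lt_of_limsup_lt ha hbdd)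
  filter_upwards [hquot, hKx] with y hy hyK
  rcases (dist_nonneg (x := y) (y := x)).eq_or_lt' with hd | hd
  · simpa [hd] using hyK
  · exact ((div_lt_iff₀ hd).1 (hy fun h => by simp [show y = x from h] at hd)).le

lemma localLip_add_le (hf : LocallyLipschitz f) (hg : LocallyLipschitz g) (x : Ω) :
    localLip (f + g) x ≤ localLip f x + localLip g x := by
  refine le_of_forall_pos_le_add fun ε hε => ?_
  have hfε := eventually_abs_sub_le_of_localLip_lt (x := x) hf (lt_add_of_pos_right _ (half_pos hε))
  have hgε := eventually_abs_sub_le_of_localLip_lt (x := x) hg (lt_add_of_pos_right _ (half_pos hε))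
  have hf0 := localLip_nonneg f x
  have hg0 := localLip_nonneg g x
  refine localLip_le_of_eventually (by positivity) ?_
  filter_upwards [hfε, hgε] with y hfy hgy
  calc |(f + g) y - (f + g) x| = |(f y - f x) + (g y - g x)| := by
        simp only [Pi.add_apply]; ring_nf
    _ ≤ |f y - f x| + |g y - g x| := abs_add_le _ _
    _ ≤ (localLip f x + localLip g x + ε) * dist y x := by linarith

lemma localLip_le_mul_of_eventually {f : Ω → ℝ} {g : Ω' → ℝ} {x : Ω} {z : Ω'} {c : ℝ} (hc : 0 ≤ c)
    (h : ∀ b, localLip g z < b → ∀ᶠ y in 𝓝 x, |f y - f x| ≤ c * b * dist y x) :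
    localLip f x ≤ c * localLip g z := by
  have hlim : Tendsto (fun b => c * b) (𝓝[>] localLip g z) (𝓝 (c * localLip g z)) :=
    (continuous_const_mul c).continuousWithinAt
  refine ge_of_tendsto hlim (eventually_mem_nhdsWithin.mono fun b hb => ?_)
  exact localLip_le_of_eventually
    (mul_nonneg hc ((localLip_nonneg g z).trans (Set.mem_Ioi.1 hb).le)) (h b hb)

lemma localLip_const_smul_le (hf : LocallyLipschitz f) (c : ℝ) (x : Ω) :
    localLip (c • f) x ≤ |c| * localLip f x := by
  refine localLip_le_mul_of_eventually (abs_nonneg c) fun b hb => ?_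
  filter_upwards [eventually_abs_sub_le_of_localLip_lt hf hb] with y hy
  rw [Pi.smul_apply, Pi.smul_apply, ← smul_sub, smul_eq_mul, abs_mul, mul_assoc]
  gcongr

lemma localLip_comp_le {K : NNReal} {T : Ω' → Ω} (hf : LocallyLipschitz f)
    (hT : LipschitzWith K T) (x : Ω') : localLip (f ∘ T) x ≤ K * localLip f (T x) := by
  refine localLip_le_mul_of_eventually K.2 fun b hb => ?_
  have hb0 : 0 ≤ b := (localLip_nonneg f (T x)).trans hb.le
  filter_upwards [hT.continuous.continuousAt.eventually
    (eventually_abs_sub_le_of_localLip_lt hf hb)] with y hy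
  calc |f (T y) - f (T x)| ≤ b * dist (T y) (T x) := hy
    _ ≤ b * (K * dist y x) := by gcongr; exact hT.dist_le_mul y x
    _ = K * b * dist y x := by ring

lemma localLip_le_of_lipschitzWith {K : NNReal} (hf : LipschitzWith K f) (x : Ω) :
    localLip f x ≤ K :=
  localLip_le_of_eventually K.2 (.of_forall fun y => hf.dist_le_mul y x)

lemma localLip_zero : localLip (0 : Ω → ℝ) = 0 := funext fun x =>
  (localLip_le_of_lipschitzWith (LipschitzWith.const 0) x).antisymm (localLip_nonneg _ x)

lemma isClosed_setOf_forall_ball_abs_sub_le (hf : Continuous f) (a r : ℝ) :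
    IsClosed {x | ∀ y ∈ Metric.ball x r, |f y - f x| ≤ a * dist y x} := by
  have : {x | ∀ y ∈ Metric.ball x r, |f y - f x| ≤ a * dist y x}
      = ⋂ y, ({x | dist y x < r}ᶜ ∪ {x | |f y - f x| ≤ a * dist y x}) := by
    ext x; simp [imp_iff_not_or]
  rw [this]
  exact isClosed_iInter fun y =>
    (isOpen_lt (by fun_prop) continuous_const).isClosed_compl.union
      (isClosed_le (by fun_prop) (by fun_prop))

lemma localLip_lt_iff_exists_rat (hf : LocallyLipschitz f) :
    localLip f x < a ↔ ∃ q : ℚ, 0 ≤ q ∧ (q : ℝ) < a ∧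
      ∃ n : ℕ, ∀ y ∈ Metric.ball x (1 / (n + 1)), |f y - f x| ≤ q * dist y x := by
  refine ⟨fun h => ?_, fun ⟨q, hq, hqa, n, hn⟩ => ?_⟩
  · obtain ⟨q, hfq, hqa⟩ := exists_rat_btwn h
    have hq : (0 : ℝ) ≤ q := (localLip_nonneg f x).trans hfq.le
    obtain ⟨n, -, hn⟩ := Metric.nhds_basis_ball_inv_nat_succ.eventually_iff.1
      (eventually_abs_sub_le_of_localLip_lt hf hfq)
    exact ⟨q, by exact_mod_cast hq, hqa, n, hn⟩
  · have hball : Metric.ball x (1 / (n + 1)) ∈ 𝓝 x := Metric.ball_mem_nhds x (by positivity)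
    exact (localLip_le_of_eventually (by exact_mod_cast hq)
      (eventually_of_mem hball hn)).trans_lt hqa

lemma measurable_localLip [MeasurableSpace Ω] [OpensMeasurableSpace Ω] (hf : LocallyLipschitz f) :
    Measurable (localLip f) := by
  refine measurable_of_Iio fun a => ?_
  have : localLip f ⁻¹' Set.Iio a = ⋃ q : ℚ, ⋃ (_ : 0 ≤ q), ⋃ (_ : (q : ℝ) < a), ⋃ n : ℕ,
      {x | ∀ y ∈ Metric.ball x (1 / (n + 1)), |f y - f x| ≤ q * dist y x} := by
    ext x
    simp only [Set.mem_preimage, Set.mem_Iio, localLip_lt_iff_exists_rat hf, Set.mem_iUnion,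
      exists_prop, Set.mem_ofPred_eq]
  rw [this]
  exact .iUnion fun q => .iUnion fun _ => .iUnion fun _ => .iUnion fun n =>
    (isClosed_setOf_forall_ball_abs_sub_le hf.continuous q _).measurableSet

end LocalLip

section SobolevSpace

variable {Ω : Type*} [MeasurableSpace Ω] {μ : Measure Ω}

lemma memLp_two_iff_lintegral_sq_lt_top {g : Ω → ℝ} (hg : AEStronglyMeasurable g μ) :
    MemLp g 2 μ ↔ ∫⁻ x, ENNReal.ofReal (g x ^ 2) ∂μ < ⊤ := by
  rw [memLp_two_iff_integrable_sq hg, Integrable,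
    hasFiniteIntegral_iff_ofReal (ae_of_all _ fun x => sq_nonneg (g x))]
  exact and_iff_right (hg.pow 2)

lemma toReal_eLpNorm_two_sq {g : Ω → ℝ} (hg : MemLp g 2 μ) :
    (eLpNorm g 2 μ).toReal ^ 2 = ∫ x, g x ^ 2 ∂μ := by
  rw [← Lp.norm_toLp g hg, ← real_inner_self_eq_norm_sq, L2.inner_def]
  refine integral_congr_ae ?_
  filter_upwards [hg.coeFn_toLp] with x hx
  simp [hx, sq]

variable [PseudoMetricSpace Ω] {f g : Ω → ℝ}

lemma eLpNorm_localLip_const_smul_le (hf : LocallyLipschitz f) (c : ℝ) (p : ℝ≥0∞) :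
    eLpNorm (localLip (c • f)) p μ ≤ ‖c‖ₑ * eLpNorm (localLip f) p μ := by
  rw [← eLpNorm_const_smul]
  refine eLpNorm_mono fun x => ?_
  rw [Real.norm_of_nonneg (localLip_nonneg _ x), Pi.smul_apply, norm_smul,
    Real.norm_of_nonneg (localLip_nonneg f x)]
  exact localLip_const_smul_le hf c x

variable [OpensMeasurableSpace Ω]

lemma memW12Lip_iff_memLp :
    memW12Lip μ f ↔ LocallyLipschitz f ∧ MemLp f 2 μ ∧ MemLp (localLip f) 2 μ := by
  refine and_congr_right fun hf => ?_
  rw [ENNReal.add_lt_top,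
    memLp_two_iff_lintegral_sq_lt_top hf.continuous.measurable.aestronglyMeasurable,
    memLp_two_iff_lintegral_sq_lt_top (measurable_localLip hf).aestronglyMeasurable]

lemma memW12Lip_of_lipschitzWith_of_bounded [IsFiniteMeasure μ] {K : NNReal} {M : ℝ}
    (hf : LipschitzWith K f) (hM : ∀ x, |f x| ≤ M) : memW12Lip μ f := by
  have hloc := hf.locallyLipschitz
  refine memW12Lip_iff_memLp.2 ⟨hloc,
    .of_bound hloc.continuous.measurable.aestronglyMeasurable M (ae_of_all _ hM),
    .of_bound (measurable_localLip hloc).aestronglyMeasurable K (ae_of_all _ fun x => ?_)⟩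
  rw [Real.norm_of_nonneg (localLip_nonneg f x)]
  exact localLip_le_of_lipschitzWith hf x

lemma eLpNorm_localLip_add_le {p : ℝ≥0∞} (hp : 1 ≤ p) (hf : LocallyLipschitz f)
    (hg : LocallyLipschitz g) :
    eLpNorm (localLip (f + g)) p μ ≤ eLpNorm (localLip f) p μ + eLpNorm (localLip g) p μ := by
  refine (eLpNorm_mono_real (g := localLip f + localLip g) fun x => ?_).trans
    (eLpNorm_add_le (measurable_localLip hf).aestronglyMeasurable
      (measurable_localLip hg).aestronglyMeasurable hp)
  rw [Real.norm_of_nonneg (localLip_nonneg _ x)]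
  exact localLip_add_le hf hg x

lemma memW12Lip_add (hf : memW12Lip μ f) (hg : memW12Lip μ g) : memW12Lip μ (f + g) := by
  rw [memW12Lip_iff_memLp] at hf hg ⊢
  have hloc : LocallyLipschitz (f + g) := hf.1.add hg.1
  exact ⟨hloc, hf.2.1.add hg.2.1, (measurable_localLip hloc).aestronglyMeasurable,
    (eLpNorm_localLip_add_le one_le_two hf.1 hg.1).trans_lt
      (ENNReal.add_lt_top.2 ⟨hf.2.2.2, hg.2.2.2⟩)⟩

lemma memW12Lip_const_smul (hf : memW12Lip μ f) (c : ℝ) : memW12Lip μ (c • f) := by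
  rw [memW12Lip_iff_memLp] at hf ⊢
  have hloc : LocallyLipschitz (c • f) := (lipschitzWith_smul c).locallyLipschitz.comp hf.1
  exact ⟨hloc, hf.2.1.const_smul c, (measurable_localLip hloc).aestronglyMeasurable,
    (eLpNorm_localLip_const_smul_le hf.1 c 2).trans_lt (ENNReal.mul_lt_top enorm_lt_top hf.2.2.2)⟩

lemma memW12Lip_zero : memW12Lip μ (0 : Ω → ℝ) := by
  rw [memW12Lip_iff_memLp, localLip_zero]
  exact ⟨.const 0, .zero, .zero⟩

variable (μ) in
/-- The metric Sobolev space `W^{1,2}_Lip(Ω,d,μ)` as a linear subspace of all functions. -/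
def w12Lip : Submodule ℝ (Ω → ℝ) where
  carrier := {f | memW12Lip μ f}
  zero_mem' := memW12Lip_zero
  add_mem' := memW12Lip_add
  smul_mem' c _ hf := memW12Lip_const_smul hf c

variable (μ) in
/-- The inclusion of `W^{1,2}_Lip(Ω,d,μ)` in `L²(μ)`. -/
noncomputable def w12LipToLp : w12Lip μ →ₗ[ℝ] Lp ℝ 2 μ where
  toFun f := (memW12Lip_iff_memLp.1 f.2).2.1.toLp f
  map_add' _ _ := rfl
  map_smul' _ _ := rfl

variable (μ) in
/-- The seminorm `f ↦ (∫ |∇f|² dμ)^(1/2)` on `W^{1,2}_Lip(Ω,d,μ)`. -/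
noncomputable def energySeminorm : Seminorm ℝ (w12Lip μ) :=
  .ofSMulLE (fun f => (eLpNorm (localLip f.1) 2 μ).toReal)
    (by simp [localLip_zero])
    (fun f g => by
      have hf := memW12Lip_iff_memLp.1 f.2
      have hg := memW12Lip_iff_memLp.1 g.2
      rw [← ENNReal.toReal_add hf.2.2.2.ne hg.2.2.2.ne]
      exact ENNReal.toReal_mono (ENNReal.add_ne_top.2 ⟨hf.2.2.2.ne, hg.2.2.2.ne⟩)
        (eLpNorm_localLip_add_le one_le_two hf.1 hg.1))
    (fun c f => by
      have hf := memW12Lip_iff_memLp.1 f.2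
      rw [← toReal_enorm, ← ENNReal.toReal_mul]
      exact ENNReal.toReal_mono (ENNReal.mul_ne_top enorm_ne_top hf.2.2.2.ne)
        (eLpNorm_localLip_const_smul_le hf.1 c 2))

lemma sq_norm_w12LipToLp (f : w12Lip μ) : ‖w12LipToLp μ f‖ ^ 2 = ∫ x, f.1 x ^ 2 ∂μ := by
  have hf := (memW12Lip_iff_memLp.1 f.2).2.1
  rw [← toReal_eLpNorm_two_sq hf, ← Lp.norm_toLp f.1 hf]
  rfl

lemma sq_energySeminorm (f : w12Lip μ) : energySeminorm μ f ^ 2 = ∫ x, localLip f.1 x ^ 2 ∂μ :=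
  toReal_eLpNorm_two_sq (memW12Lip_iff_memLp.1 f.2).2.2

lemma w12LipToLp_injective [μ.IsOpenPosMeasure] : Function.Injective (w12LipToLp μ) := by
  intro f g hfg
  have hae : f.1 =ᵐ[μ] g.1 :=
    (MemLp.toLp_eq_toLp_iff (memW12Lip_iff_memLp.1 f.2).2.1 (memW12Lip_iff_memLp.1 g.2).2.1).1 hfg
  exact Subtype.ext (Continuous.ae_eq_iff_eq μ f.2.1.continuous g.2.1.continuous |>.1 hae)

end SobolevSpace

section Rayleigh

lemma exists_seminorm_le_mul_norm_of_injective {V E : Type*} [AddCommGroup V] [Module ℝ V]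
    [FiniteDimensional ℝ V] [NormedAddCommGroup E] [NormedSpace ℝ E] (p : Seminorm ℝ V)
    {A : V →ₗ[ℝ] E} (hA : Function.Injective A) : ∃ C, ∀ v, p v ≤ C * ‖A v‖ := by
  let _ := NormedAddCommGroup.induced V E A hA
  let _ := NormedSpace.induced ℝ V E A
  obtain ⟨C, -, hC⟩ :=
    p.bound_of_continuous_normedSpace p.convexOn.locallyLipschitz.continuous
  exact ⟨C, hC⟩

variable {Ω : Type*} [PseudoMetricSpace Ω] [MeasurableSpace Ω]

/-- The Rayleigh quotients of the elements of `F` with nonzero `L²(μ)` norm, so that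
`λ_k^Lip` is the infimum of `sSup (rayleighQuotients μ F)` over `k`-dimensional `F`. -/
def rayleighQuotients (μ : Measure Ω) (F : Submodule ℝ (Ω → ℝ)) : Set ℝ :=
  {r | ∃ f ∈ F, (∫ x, f x ^ 2 ∂μ) ≠ 0 ∧ r = (∫ x, localLip f x ^ 2 ∂μ) / ∫ x, f x ^ 2 ∂μ}

variable {μ : Measure Ω} {F : Submodule ℝ (Ω → ℝ)}

lemma sSup_rayleighQuotients_nonneg (μ : Measure Ω) (F : Submodule ℝ (Ω → ℝ)) :
    0 ≤ sSup (rayleighQuotients μ F) := by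
  refine Real.sSup_nonneg ?_
  rintro r ⟨f, -, -, rfl⟩
  exact div_nonneg (integral_nonneg fun x => sq_nonneg _) (integral_nonneg fun x => sq_nonneg _)

lemma lambdaLip_le_sSup_rayleighQuotients {k : ℕ} (hFk : Module.finrank ℝ F = k)
    (hF : ∀ f ∈ F, memW12Lip μ f) : lambdaLip μ k ≤ sSup (rayleighQuotients μ F) := by
  refine csInf_le ⟨0, ?_⟩ ⟨F, hFk, hF, rfl⟩
  rintro a ⟨G, -, -, rfl⟩
  exact sSup_rayleighQuotients_nonneg μ G

lemma exists_integral_sq_localLip_le [OpensMeasurableSpace Ω] [μ.IsOpenPosMeasure]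
    [FiniteDimensional ℝ F] (hF : ∀ f ∈ F, memW12Lip μ f) :
    ∃ C : ℝ, ∀ f ∈ F, ∫ x, localLip f x ^ 2 ∂μ ≤ C * ∫ x, f x ^ 2 ∂μ := by
  let ι : F →ₗ[ℝ] w12Lip μ := Submodule.inclusion hF
  have hι : Function.Injective (w12LipToLp μ ∘ₗ ι) :=
    w12LipToLp_injective.comp (Submodule.inclusion_injective hF)
  obtain ⟨C, hC⟩ := exists_seminorm_le_mul_norm_of_injective ((energySeminorm μ).comp ι) hι
  refine ⟨C ^ 2, fun f hf => ?_⟩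
  have hsq := pow_le_pow_left₀ (apply_nonneg _ _) (hC ⟨f, hf⟩) 2
  rwa [mul_pow, Seminorm.comp_apply, sq_energySeminorm, LinearMap.comp_apply,
    sq_norm_w12LipToLp] at hsq

lemma bddAbove_rayleighQuotients [OpensMeasurableSpace Ω] [μ.IsOpenPosMeasure]
    [FiniteDimensional ℝ F] (hF : ∀ f ∈ F, memW12Lip μ f) :
    BddAbove (rayleighQuotients μ F) := by
  obtain ⟨C, hC⟩ := exists_integral_sq_localLip_le hF
  refine ⟨C, ?_⟩
  rintro r ⟨f, hf, hne, rfl⟩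
  have hpos : 0 < ∫ x, f x ^ 2 ∂μ := (integral_nonneg fun x => sq_nonneg _).lt_of_ne' hne
  exact (div_le_iff₀ hpos).2 (hC f hf)

end Rayleigh

section TrialSpaces

lemma exists_memW12Lip_eq_one_of_notMem_isClosed {Ω : Type*} [PseudoMetricSpace Ω]
    [MeasurableSpace Ω] [OpensMeasurableSpace Ω] (μ : Measure Ω) [IsFiniteMeasure μ] {s : Set Ω}
    (hs : IsClosed s) {x : Ω} (hx : x ∉ s) :
    ∃ f : Ω → ℝ, memW12Lip μ f ∧ f x = 1 ∧ ∀ y ∈ s, f y = 0 := by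
  obtain ⟨δ, hδ, hball⟩ := Metric.isOpen_iff.1 hs.isOpen_compl x hx
  refine ⟨fun y => thickenedIndicator hδ {x} y, ?_, ?_, fun y hy => ?_⟩
  · refine memW12Lip_of_lipschitzWith_of_bounded (M := 1)
      (NNReal.isometry_coe.lipschitz.comp (lipschitzWith_thickenedIndicator hδ {x})) fun y => ?_
    exact (NNReal.abs_eq _).trans_le (NNReal.coe_le_one.2 (thickenedIndicator_le_one hδ {x} y))
  · exact NNReal.coe_eq_one.2 (thickenedIndicator_one hδ {x} rfl)
  · refine NNReal.coe_eq_zero.2 (thickenedIndicator_zero hδ {x} fun hyx => ?_)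
    rw [Metric.thickening_singleton] at hyx
    exact hball hyx hy

lemma exists_finrank_eq_forall_memW12Lip {Ω : Type*} [MetricSpace Ω] [Infinite Ω]
    [MeasurableSpace Ω] [OpensMeasurableSpace Ω] (μ : Measure Ω) [IsFiniteMeasure μ] (k : ℕ) :
    ∃ F : Submodule ℝ (Ω → ℝ), Module.finrank ℝ F = k ∧ ∀ f ∈ F, memW12Lip μ f := by
  let p : Fin k ↪ Ω := Fin.valEmbedding.trans (Infinite.natEmbedding Ω)
  have hbump (i : Fin k) : ∃ f : Ω → ℝ, memW12Lip μ f ∧ f (p i) = 1 ∧ ∀ y ∈ p '' {i}ᶜ, f y = 0 :=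
    exists_memW12Lip_eq_one_of_notMem_isClosed μ (Set.toFinite _).isClosed
      (by simp [p.injective.eq_iff])
  choose b hb hb_one hb_zero using hbump
  have hindep : LinearIndependent ℝ b :=
    .of_pairwise_dual_eq_zero_one b (fun i => LinearMap.proj (p i))
      (fun i j hij => hb_zero j (p i) (Set.mem_image_of_mem p hij)) hb_one
  have hspan : Submodule.span ℝ (Set.range b) ≤ w12Lip μ :=
    Submodule.span_le.2 (Set.range_subset_iff.2 hb)
  exact ⟨_, by simpa using finrank_span_eq_card hindep, fun f hf => hspan hf⟩

end TrialSpaces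

section Contraction

variable {Ω₁ Ω₂ : Type*} {T : Ω₁ → Ω₂}

lemma finrank_map_funLeft_of_denseRange [TopologicalSpace Ω₂] {F : Submodule ℝ (Ω₂ → ℝ)}
    (hT : DenseRange T) (hF : ∀ f ∈ F, Continuous f) :
    Module.finrank ℝ (F.map (LinearMap.funLeft ℝ ℝ T)) = Module.finrank ℝ F := by
  have hinj : Function.Injective ((LinearMap.funLeft ℝ ℝ T).domRestrict F) := fun f g hfg =>
    Subtype.ext (hT.equalizer (hF f f.2) (hF g g.2) hfg)
  rw [← LinearMap.range_domRestrict, LinearMap.finrank_range_of_inj hinj]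

variable [MeasurableSpace Ω₁] [MeasurableSpace Ω₂] {μ₁ : Measure Ω₁} {μ₂ : Measure Ω₂}

lemma denseRange_of_measurePreserving [TopologicalSpace Ω₂] [OpensMeasurableSpace Ω₂]
    [μ₂.IsOpenPosMeasure] (hT : MeasurePreserving T μ₁ μ₂) : DenseRange T := by
  have hpre : T ⁻¹' (closure (Set.range T))ᶜ = ∅ :=
    Set.eq_empty_of_forall_notMem fun x hx => hx (subset_closure (Set.mem_range_self x))
  have hnull : μ₂ (closure (Set.range T))ᶜ = 0 := by
    rw [← hT.measure_preimage isClosed_closure.isOpen_compl.measurableSet.nullMeasurableSet, hpre,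
      measure_empty]
  have hempty := (isClosed_closure.isOpen_compl.measure_eq_zero_iff μ₂).1 hnull
  exact dense_iff_closure_eq.2 (Set.compl_empty_iff.1 hempty)

lemma integral_sq_comp (hT : MeasurePreserving T μ₁ μ₂) {f : Ω₂ → ℝ} (hf : Measurable f) :
    ∫ x, f (T x) ^ 2 ∂μ₁ = ∫ x, f x ^ 2 ∂μ₂ := by
  rw [← hT.map_eq, integral_map hT.aemeasurable (hf.pow_const 2).aestronglyMeasurable]

variable [PseudoMetricSpace Ω₁] [OpensMeasurableSpace Ω₁] [PseudoMetricSpace Ω₂]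
  [OpensMeasurableSpace Ω₂] {K : NNReal} {f : Ω₂ → ℝ}

lemma memW12Lip_comp (hTK : LipschitzWith K T) (hT : MeasurePreserving T μ₁ μ₂)
    (hf : memW12Lip μ₂ f) : memW12Lip μ₁ (f ∘ T) := by
  rw [memW12Lip_iff_memLp] at hf ⊢
  have hloc : LocallyLipschitz (f ∘ T) := hf.1.comp hTK.locallyLipschitz
  refine ⟨hloc, hf.2.1.comp_measurePreserving hT,
    ((hf.2.2.comp_measurePreserving hT).const_mul (K : ℝ)).mono'
      (measurable_localLip hloc).aestronglyMeasurable (ae_of_all _ fun x => ?_)⟩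
  rw [Real.norm_of_nonneg (localLip_nonneg _ x)]
  exact localLip_comp_le hf.1 hTK x

lemma integral_sq_localLip_comp_le (hTK : LipschitzWith K T) (hT : MeasurePreserving T μ₁ μ₂)
    (hf : memW12Lip μ₂ f) :
    ∫ x, localLip (f ∘ T) x ^ 2 ∂μ₁ ≤ K ^ 2 * ∫ x, localLip f x ^ 2 ∂μ₂ := by
  have hf' := memW12Lip_iff_memLp.1 hf
  rw [← integral_sq_comp hT (measurable_localLip hf.1), ← integral_const_mul]
  refine integral_mono (memW12Lip_iff_memLp.1 (memW12Lip_comp hTK hT hf)).2.2.integrable_sq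
    ((hf'.2.2.comp_measurePreserving hT).integrable_sq.const_mul _) fun x => ?_
  dsimp only [Function.comp_apply]
  rw [← mul_pow]
  exact pow_le_pow_left₀ (localLip_nonneg _ x) (localLip_comp_le hf.1 hTK x) 2

lemma sSup_rayleighQuotients_map_funLeft_le {F : Submodule ℝ (Ω₂ → ℝ)}
    (hTK : LipschitzWith K T) (hT : MeasurePreserving T μ₁ μ₂) (hF : ∀ f ∈ F, memW12Lip μ₂ f)
    (hbdd : BddAbove (rayleighQuotients μ₂ F)) :
    sSup (rayleighQuotients μ₁ (F.map (LinearMap.funLeft ℝ ℝ T))) ≤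
      K ^ 2 * sSup (rayleighQuotients μ₂ F) := by
  refine Real.sSup_le ?_ (mul_nonneg (sq_nonneg _) (sSup_rayleighQuotients_nonneg μ₂ F))
  rintro r ⟨_, ⟨f, hf, rfl⟩, hne, rfl⟩
  change (∫ x, f (T x) ^ 2 ∂μ₁) ≠ 0 at hne
  have hL2 := integral_sq_comp hT (hF f hf).1.continuous.measurable
  have hpos : 0 ≤ ∫ x, f x ^ 2 ∂μ₂ := integral_nonneg fun x => sq_nonneg _
  rw [hL2] at hne
  calc (∫ x, localLip (f ∘ T) x ^ 2 ∂μ₁) / ∫ x, f (T x) ^ 2 ∂μ₁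
      ≤ (K ^ 2 * ∫ x, localLip f x ^ 2 ∂μ₂) / ∫ x, f x ^ 2 ∂μ₂ := by
        rw [hL2]
        gcongr
        exact integral_sq_localLip_comp_le hTK hT (hF f hf)
    _ = K ^ 2 * ((∫ x, localLip f x ^ 2 ∂μ₂) / ∫ x, f x ^ 2 ∂μ₂) := mul_div_assoc _ _ _
    _ ≤ K ^ 2 * sSup (rayleighQuotients μ₂ F) := by
        gcongr
        exact le_csSup hbdd ⟨f, hf, hne, rfl⟩

theorem lambdaLip_le_sq_mul_of_lipschitzWith [μ₂.IsOpenPosMeasure] {k : ℕ} (hk : k ≠ 0)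
    (hne : ∃ F : Submodule ℝ (Ω₂ → ℝ), Module.finrank ℝ F = k ∧ ∀ f ∈ F, memW12Lip μ₂ f)
    (hTK : LipschitzWith K T) (hT : MeasurePreserving T μ₁ μ₂) :
    lambdaLip μ₁ k ≤ K ^ 2 * lambdaLip μ₂ k := by
  obtain ⟨F₀, hF₀k, hF₀⟩ := hne
  rw [lambdaLip.eq_def μ₂, ← smul_eq_mul, ← Real.sInf_smul_of_nonneg (sq_nonneg _)]
  refine le_csInf (Set.Nonempty.smul_set ⟨_, F₀, hF₀k, hF₀, rfl⟩) ?_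
  rintro _ ⟨_, ⟨F, hFk, hF, rfl⟩, rfl⟩
  have : FiniteDimensional ℝ F := .of_finrank_pos (by omega)
  refine (lambdaLip_le_sSup_rayleighQuotients ?_ ?_).trans
    (sSup_rayleighQuotients_map_funLeft_le hTK hT hF (bddAbove_rayleighQuotients hF))
  · rw [finrank_map_funLeft_of_denseRange (denseRange_of_measurePreserving hT)
      fun f hf => (hF f hf).1.continuous, hFk]
  · rintro _ ⟨f, hf, rfl⟩
    change memW12Lip μ₁ (f ∘ T)
    exact memW12Lip_comp hTK hT (hF f hf)

end Contraction

section OneDimensional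

variable {μ : Measure ℝ} {f : ℝ → ℝ}

lemma hasDerivAt_cdf_of_density (hf : Continuous f) (hf0 : ∀ x, 0 ≤ f x)
    (hμ : μ = volume.withDensity fun x => ENNReal.ofReal (f x)) [IsFiniteMeasure μ] (x : ℝ) :
    HasDerivAt (cdf μ) (f x) x := by
  have hint : Integrable f := by
    refine ⟨hf.aestronglyMeasurable, ?_⟩
    rw [hasFiniteIntegral_iff_ofReal (ae_of_all _ hf0), ← setLIntegral_univ,
      ← withDensity_apply _ MeasurableSet.univ, ← hμ]
    exact measure_lt_top μ Set.univ
  have hcdf (y : ℝ) : cdf μ y = ∫ t in Set.Iic y, f t := by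
    rw [integral_eq_lintegral_of_nonneg_ae (ae_of_all _ hf0) hf.aestronglyMeasurable, cdf, hμ,
      withDensity_apply _ measurableSet_Iic]
  have hsplit : cdf μ = fun y => cdf μ 0 + ∫ t in (0 : ℝ)..y, f t := by
    funext y
    rw [hcdf, hcdf, ← intervalIntegral.integral_Iic_sub_Iic hint.integrableOn hint.integrableOn,
      add_sub_cancel]
  rw [hsplit]
  exact (hf.integral_hasStrictDerivAt 0 x).hasDerivAt.const_add _

lemma isOpenPosMeasure_withDensity_ofReal {X : Type*} [TopologicalSpace X] [MeasurableSpace X]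
    {ν : Measure X} [ν.IsOpenPosMeasure] {f : X → ℝ} (hf : Measurable f) (hf0 : ∀ x, 0 < f x) :
    (ν.withDensity fun x => ENNReal.ofReal (f x)).IsOpenPosMeasure :=
  (withDensity_absolutelyContinuous' hf.ennreal_ofReal.aemeasurable
    (ae_of_all _ fun x => (ENNReal.ofReal_pos.2 (hf0 x)).ne')).isOpenPosMeasure

lemma cdf_eq_probabilityTheory_cdf [IsProbabilityMeasure μ] : cdf μ = ProbabilityTheory.cdf μ :=
  funext fun x => (ProbabilityTheory.cdf_eq_real μ x).symm

lemma range_cdf_eq_Ioo [IsProbabilityMeasure μ] (hcont : Continuous (cdf μ))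
    (hmono : StrictMono (cdf μ)) : Set.range (cdf μ) = Set.Ioo 0 1 := by
  have htop : Tendsto (cdf μ) atTop (𝓝 1) :=
    cdf_eq_probabilityTheory_cdf (μ := μ) ▸ ProbabilityTheory.tendsto_cdf_atTop μ
  have hbot : Tendsto (cdf μ) atBot (𝓝 0) :=
    cdf_eq_probabilityTheory_cdf (μ := μ) ▸ ProbabilityTheory.tendsto_cdf_atBot μ
  refine Set.Subset.antisymm (Set.range_subset_iff.2 fun x => ⟨?_, ?_⟩) fun v hv => ?_
  · exact (hmono.monotone.le_of_tendsto hbot (x - 1)).trans_lt (hmono (sub_one_lt x))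
  · exact (hmono (lt_add_one x)).trans_le (hmono.monotone.ge_of_tendsto htop (x + 1))
  · exact mem_range_of_exists_le_of_exists_ge hcont
      (hbot.eventually_le_const hv.1).exists (htop.eventually_const_le hv.2).exists

lemma continuousAt_invFun_of_strictMono {F : ℝ → ℝ} {v : ℝ} (hF : StrictMono F)
    (hv : Set.range F ∈ 𝓝 v) : ContinuousAt (Function.invFun F) v := by
  have hmono : StrictMonoOn (Function.invFun F) (Set.range F) := by
    rintro _ ⟨x, rfl⟩ _ ⟨y, rfl⟩ hxy
    rwa [Function.leftInverse_invFun hF.injective, Function.leftInverse_invFun hF.injective,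
      ← hF.lt_iff_lt]
  refine hmono.continuousAt_of_image_mem_nhds hv (mem_of_superset univ_mem fun x _ => ?_)
  exact ⟨F x, Set.mem_range_self x, Function.leftInverse_invFun hF.injective x⟩

lemma hasDerivAt_invFun_of_strictMono {F : ℝ → ℝ} {F' v : ℝ} (hF : StrictMono F)
    (hv : Set.range F ∈ 𝓝 v) (hderiv : HasDerivAt F F' (Function.invFun F v)) (hF' : F' ≠ 0) :
    HasDerivAt (Function.invFun F) F'⁻¹ v :=
  hderiv.of_local_left_inverse (continuousAt_invFun_of_strictMono hF hv) hF'
    (eventually_of_mem hv fun _ hw => Function.invFun_eq hw)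

/-- The monotone transport map `F_{μ₂}⁻¹ ∘ F_{μ₁}` between two measures on `ℝ`, with `F_{μ₂}⁻¹`
encoded as in `flatIsopProfile`. -/
noncomputable def monotoneTransport (μ₁ μ₂ : Measure ℝ) : ℝ → ℝ :=
  Function.invFun (cdf μ₂) ∘ cdf μ₁

variable {μ₁ μ₂ : Measure ℝ}

lemma cdf_monotoneTransport (hrange : Set.range (cdf μ₁) ⊆ Set.range (cdf μ₂)) (x : ℝ) :
    cdf μ₂ (monotoneTransport μ₁ μ₂ x) = cdf μ₁ x :=
  Function.invFun_eq (hrange (Set.mem_range_self x))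

lemma measurePreserving_monotoneTransport [IsFiniteMeasure μ₁] [IsFiniteMeasure μ₂]
    (hmono₁ : StrictMono (cdf μ₁)) (hmono₂ : StrictMono (cdf μ₂))
    (hrange : Set.range (cdf μ₁) = Set.range (cdf μ₂)) :
    MeasurePreserving (monotoneTransport μ₁ μ₂) μ₁ μ₂ := by
  have hcdf := cdf_monotoneTransport (μ₁ := μ₁) (μ₂ := μ₂) hrange.le
  have hT : StrictMono (monotoneTransport μ₁ μ₂) := fun x y hxy => by
    rw [← hmono₂.lt_iff_lt, hcdf, hcdf]
    exact hmono₁ hxy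
  have hmeas := hT.monotone.measurable
  refine ⟨hmeas, Measure.ext_of_Iic _ _ fun a => ?_⟩
  obtain ⟨b, hb⟩ : cdf μ₂ a ∈ Set.range (cdf μ₁) := hrange ▸ Set.mem_range_self a
  obtain rfl : monotoneTransport μ₁ μ₂ b = a := hmono₂.injective ((hcdf b).trans hb)
  have hpre : monotoneTransport μ₁ μ₂ ⁻¹' Set.Iic (monotoneTransport μ₁ μ₂ b) = Set.Iic b :=
    Set.ext fun x => hT.le_iff_le
  rw [Measure.map_apply hmeas measurableSet_Iic, hpre]
  exact (ENNReal.toReal_eq_toReal_iff' (measure_ne_top _ _) (measure_ne_top _ _)).1 hb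

lemma flatIsopProfile_cdf (hmono : StrictMono (cdf μ)) (f : ℝ → ℝ) (x : ℝ) :
    flatIsopProfile μ f (cdf μ x) = f x :=
  congrArg f (Function.leftInverse_invFun hmono.injective x)

variable {f₁ f₂ : ℝ → ℝ}

lemma hasDerivAt_monotoneTransport (hmono₁ : StrictMono (cdf μ₁)) (hmono₂ : StrictMono (cdf μ₂))
    {x : ℝ} (hrange : Set.range (cdf μ₂) ∈ 𝓝 (cdf μ₁ x))
    (hcdf₁ : HasDerivAt (cdf μ₁) (f₁ x) x) (hcdf₂ : ∀ y, HasDerivAt (cdf μ₂) (f₂ y) y)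
    (hf₂ : ∀ y, f₂ y ≠ 0) :
    HasDerivAt (monotoneTransport μ₁ μ₂)
      (flatIsopProfile μ₁ f₁ (cdf μ₁ x) / flatIsopProfile μ₂ f₂ (cdf μ₁ x)) x := by
  rw [flatIsopProfile_cdf hmono₁, div_eq_inv_mul]
  exact (hasDerivAt_invFun_of_strictMono hmono₂ hrange (hcdf₂ _) (hf₂ _)).comp x hcdf₁

lemma lipschitzWith_monotoneTransport (hcdf₁ : ∀ x, HasDerivAt (cdf μ₁) (f₁ x) x)
    (hcdf₂ : ∀ x, HasDerivAt (cdf μ₂) (f₂ x) x) (hf₁ : ∀ x, 0 < f₁ x) (hf₂ : ∀ x, 0 < f₂ x)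
    {s : Set ℝ} (hs : IsOpen s) (hrange₁ : Set.range (cdf μ₁) ⊆ s)
    (hrange₂ : s ⊆ Set.range (cdf μ₂)) {K : NNReal}
    (hprof : ∀ v ∈ s, flatIsopProfile μ₁ f₁ v ≤ K * flatIsopProfile μ₂ f₂ v) :
    LipschitzWith K (monotoneTransport μ₁ μ₂) := by
  have hmem (x : ℝ) : cdf μ₁ x ∈ s := hrange₁ (Set.mem_range_self x)
  have hderiv (x : ℝ) := hasDerivAt_monotoneTransport
    (strictMono_of_hasDerivAt_pos hcdf₁ hf₁) (strictMono_of_hasDerivAt_pos hcdf₂ hf₂)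
    (mem_of_superset (hs.mem_nhds (hmem x)) hrange₂) (hcdf₁ x) hcdf₂ fun y => (hf₂ y).ne'
  refine lipschitzWith_of_nnnorm_deriv_le (fun x => (hderiv x).differentiableAt) fun x => ?_
  have hpos₁ : 0 < flatIsopProfile μ₁ f₁ (cdf μ₁ x) := hf₁ _
  have hpos₂ : 0 < flatIsopProfile μ₂ f₂ (cdf μ₁ x) := hf₂ _
  rw [(hderiv x).deriv, ← NNReal.coe_le_coe, coe_nnnorm,
    Real.norm_of_nonneg (div_pos hpos₁ hpos₂).le]
  exact (div_le_iff₀ hpos₂).2 (hprof _ (hmem x))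

end OneDimensional

/-- **Spectral comparison via one-dimensional isoperimetric profiles**
(Bobkov–Houdré + Contraction Principle): if `μ₁, μ₂` are probability measures on `ℝ`
with continuous positive densities and `𝓘♭_{μ₂} ≥ (1/L)·𝓘♭_{μ₁}` on `(0,1)`, then
`λ_k^Lip(ℝ,|·|,μ₂) ≥ (1/L²)·λ_k^Lip(ℝ,|·|,μ₁)` for all `k ≥ 1`. -/
theorem spectral_comparison_one_dimensional
    (f₁ f₂ : ℝ → ℝ) (hf₁c : Continuous f₁) (hf₂c : Continuous f₂)
    (hf₁pos : ∀ x, 0 < f₁ x) (hf₂pos : ∀ x, 0 < f₂ x)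
    (μ₁ μ₂ : Measure ℝ)
    (hμ₁ : μ₁ = volume.withDensity fun x => ENNReal.ofReal (f₁ x))
    (hμ₂ : μ₂ = volume.withDensity fun x => ENNReal.ofReal (f₂ x))
    [IsProbabilityMeasure μ₁] [IsProbabilityMeasure μ₂]
    (L : ℝ) (hL : 0 < L)
    (hprof : ∀ v ∈ Set.Ioo (0 : ℝ) 1,
      (1 / L) * flatIsopProfile μ₁ f₁ v ≤ flatIsopProfile μ₂ f₂ v)
    (k : ℕ) (hk : 1 ≤ k) :
    (1 / L ^ 2) * lambdaLip μ₁ k ≤ lambdaLip μ₂ k := by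
  have hcdf₁ := hasDerivAt_cdf_of_density hf₁c (fun x => (hf₁pos x).le) hμ₁
  have hcdf₂ := hasDerivAt_cdf_of_density hf₂c (fun x => (hf₂pos x).le) hμ₂
  have hmono₁ := strictMono_of_hasDerivAt_pos hcdf₁ hf₁pos
  have hmono₂ := strictMono_of_hasDerivAt_pos hcdf₂ hf₂pos
  have hrange₁ := range_cdf_eq_Ioo
    (continuous_iff_continuousAt.2 fun x => (hcdf₁ x).continuousAt) hmono₁
  have hrange₂ := range_cdf_eq_Ioo
    (continuous_iff_continuousAt.2 fun x => (hcdf₂ x).continuousAt) hmono₂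
  have hprofL (v : ℝ) (hv : v ∈ Set.Ioo (0 : ℝ) 1) :
      flatIsopProfile μ₁ f₁ v ≤ L.toNNReal * flatIsopProfile μ₂ f₂ v := by
    rw [Real.coe_toNNReal L hL.le, ← inv_mul_le_iff₀ hL, ← one_div]
    exact hprof v hv
  have hlip := lipschitzWith_monotoneTransport hcdf₁ hcdf₂ hf₁pos hf₂pos isOpen_Ioo
    hrange₁.le hrange₂.ge hprofL
  have hpres := measurePreserving_monotoneTransport hmono₁ hmono₂ (hrange₁.trans hrange₂.symm)
  have : μ₂.IsOpenPosMeasure := hμ₂ ▸ isOpenPosMeasure_withDensity_ofReal hf₂c.measurable hf₂pos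
  have hle := lambdaLip_le_sq_mul_of_lipschitzWith (Nat.one_le_iff_ne_zero.1 hk)
    (exists_finrank_eq_forall_memW12Lip μ₂ k) hlip hpres
  rw [Real.coe_toNNReal L hL.le] at hle
  rwa [one_div, inv_mul_le_iff₀ (by positivity)]
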